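/- arXiv:2511.11390 — 3 statements merged into one kernel-verified Lean document; each statement's English description precedes it below -/
import Mathlib

section
/- Characterization of the exact prophecy annotation via the winning region: Let A = (Q, q0, δ, safe(F)) be a deterministic safety automaton over Σ, M_p = (S^p, s0^p, τ^p, o^p) ∈ ℙ a plant, and Win the winning region of the safety game of A and M_p. For all q ∈ Q, s ∈ S^p, and α ⊆ O_c: M_p(s) ∈ κ*(q, α) if and only if q ∈ F and (δ(q, α ∪ β ∪ o^p(s)), τ^p(s, α ∪ β)) ∈ Win for every β ⊆ O_e. -/
/-- A Moore machine over atomic propositions `AP`, with input propositions `I ⊆ AP`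
and output propositions `O ⊆ AP`.  Letters in `2^I` are encoded as sets `σ : Set AP`
where the transition function is invariant under intersecting with `I`, and the
output labeling produces subsets of `O`. -/
structure Moore (AP : Type) (I O : Set AP) : Type 1 where
  S : Type
  fin : Finite S
  s0 : S
  tr : S → Set AP → S
  out : S → Set AP
  tr_inv : ∀ s σ, tr s σ = tr s (σ ∩ I)
  out_sub : ∀ s, out s ⊆ O

namespace Moore

variable {AP : Type} {I O : Set AP}

/-- `M.at' s` is `M` with initial state replaced by `s` (written `M(s)` in the paper). -/
def at' (M : Moore AP I O) (s : M.S) : Moore AP I O :=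
  { M with s0 := s }

/-- The run of `M` on an infinite word `γ`: at step `j` the machine reads input `γ j ∩ I`. -/
def run (M : Moore AP I O) (γ : ℕ → Set AP) : ℕ → M.S
  | 0 => M.s0
  | j + 1 => M.tr (M.run γ j) (γ j ∩ I)

/-- `Traces(M)`: all `γ` whose `O`-component agrees with the outputs along the run of `M`. -/
def Traces (M : Moore AP I O) : Set (ℕ → Set AP) :=
  { γ | ∀ j, γ j ∩ O = M.out (M.run γ j) }

end Moore

/-- Parallel composition `M1 ∥ M2` of Moore machines of two distinct processes. -/
def par {AP : Type} {I1 O1 I2 O2 : Set AP} (M1 : Moore AP I1 O1) (M2 : Moore AP I2 O2) :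
    Moore AP ((I1 ∪ I2) \ (O1 ∪ O2)) (O1 ∪ O2) where
  S := M1.S × M2.S
  fin := by haveI := M1.fin; haveI := M2.fin; exact inferInstance
  s0 := (M1.s0, M2.s0)
  tr p σ :=
    (M1.tr p.1 ((σ ∩ ((I1 ∪ I2) \ (O1 ∪ O2)) ∪ M2.out p.2) ∩ I1),
     M2.tr p.2 ((σ ∩ ((I1 ∪ I2) \ (O1 ∪ O2)) ∪ M1.out p.1) ∩ I2))
  out p := M1.out p.1 ∪ M2.out p.2
  tr_inv := by intro s σ; simp [Set.inter_assoc]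
  out_sub p := Set.union_subset_union (M1.out_sub p.1) (M2.out_sub p.2)

/-- A deterministic safety automaton `A = (Q, q0, δ, safe(F))` over alphabet `2^AP`. -/
structure DSA (AP : Type) : Type 1 where
  Q : Type
  fin : Finite Q
  q0 : Q
  δ : Q → Set AP → Q
  F : Set Q

namespace DSA

variable {AP : Type}

/-- The run of `A` from state `q` on the infinite word `γ`. -/
def run (A : DSA AP) (q : A.Q) (γ : ℕ → Set AP) : ℕ → A.Q
  | 0 => q
  | i + 1 => A.δ (A.run q γ i) (γ i)

/-- `L(A)`: all words whose run from `q0` stays in the safe states `F`. -/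
def Lang (A : DSA AP) : Set (ℕ → Set AP) :=
  { γ | ∀ i, A.run A.q0 γ i ∈ A.F }

end DSA

/-- `Runs(A, q, M) ⊆ safe(F)`: every run of `A` from `q` on a trace of `M` stays in `F`. -/
def SafeRuns {AP : Type} {I O : Set AP} (A : DSA AP) (q : A.Q) (M : Moore AP I O) : Prop :=
  ∀ γ ∈ M.Traces, ∀ i, A.run q γ i ∈ A.F

/-- `M_c ⊨ (A(q), κ) ∥ M_p`: the controller `M_c` is consistent with the
prophecy-annotated controller `(A(q), κ)` w.r.t. the plant `M_p`: at every
reachable triple of the product of `A` (started at `q`) with `M_c ∥ M_p`,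
the residual plant satisfies the prophecy for the current controller output. -/
def Consistent {AP : Type} (Oe Oc Op : Set AP) (A : DSA AP) (q : A.Q)
    (κ : A.Q → Set AP → Set (Moore AP (Oe ∪ Oc) Op))
    (Mc : Moore AP (Oe ∪ Op) Oc) (Mp : Moore AP (Oe ∪ Oc) Op) : Prop :=
  ∀ γ ∈ (par Mc Mp).Traces, ∀ i,
    Mp.at' ((par Mc Mp).run γ i).2 ∈
      κ (A.run q γ i) (Mc.out ((par Mc Mp).run γ i).1)

/-- `(A, κ)` is correct for the plant `M_p` w.r.t. the specification `φ`. -/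
def CorrectFor {AP : Type} (Oe Oc Op : Set AP) (A : DSA AP)
    (κ : A.Q → Set AP → Set (Moore AP (Oe ∪ Oc) Op))
    (φ : Set (ℕ → Set AP)) (Mp : Moore AP (Oe ∪ Oc) Op) : Prop :=
  ∀ Mc : Moore AP (Oe ∪ Op) Oc,
    Consistent Oe Oc Op A A.q0 κ Mc Mp → (par Mp Mc).Traces ⊆ φ

/-- `(A, κ)` is most permissive for the plant `M_p` w.r.t. the specification `φ`. -/
def MostPermissiveFor {AP : Type} (Oe Oc Op : Set AP) (A : DSA AP)
    (κ : A.Q → Set AP → Set (Moore AP (Oe ∪ Oc) Op))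
    (φ : Set (ℕ → Set AP)) (Mp : Moore AP (Oe ∪ Oc) Op) : Prop :=
  ∀ Mc : Moore AP (Oe ∪ Op) Oc,
    (par Mp Mc).Traces ⊆ φ → Consistent Oe Oc Op A A.q0 κ Mc Mp

/-- `X` is a safe controllable region of the safety game of `A` and `M_p`:
`X ⊆ F × S^p`, and from every `(q,s) ∈ X` some controller output `α ⊆ O_c`
keeps the game in `X` for every environment output `β ⊆ O_e`. -/
def WinStep {AP : Type} (Oe Oc Op : Set AP) (A : DSA AP)
    (Mp : Moore AP (Oe ∪ Oc) Op) (X : Set (A.Q × Mp.S)) : Prop :=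
  (∀ p ∈ X, p.1 ∈ A.F) ∧
    ∀ p ∈ X, ∃ α ⊆ Oc, ∀ β ⊆ Oe,
      (A.δ p.1 (α ∪ β ∪ Mp.out p.2), Mp.tr p.2 (α ∪ β)) ∈ X

/-- The winning region of the safety game of `A` and `M_p`: the largest
(safe controllable) set `X` with `WinStep`, i.e. the union of all of them. -/
def Win {AP : Type} (Oe Oc Op : Set AP) (A : DSA AP)
    (Mp : Moore AP (Oe ∪ Oc) Op) : Set (A.Q × Mp.S) :=
  ⋃₀ { X | WinStep Oe Oc Op A Mp X }

/-- The exact prophecy annotation `κ*` of `A`: all plants for which some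
controller with initial output `α` keeps every run of `A` from `q` inside `F`. -/
def κStar {AP : Type} (Oe Oc Op : Set AP) (A : DSA AP) (q : A.Q) (α : Set AP) :
    Set (Moore AP (Oe ∪ Oc) Op) :=
  { Mp | ∃ Mc : Moore AP (Oe ∪ Op) Oc, Mc.out Mc.s0 = α ∧ SafeRuns A q (par Mp Mc) }

/-- `Add_{M_p}(q, α)`: the residual plants `M_p(s)` such that `q ∈ F` and output `α`
leads into the winning region for every environment output `β ⊆ O_e`. -/
def AddSet {AP : Type} (Oe Oc Op : Set AP) (A : DSA AP)
    (Mp : Moore AP (Oe ∪ Oc) Op) (q : A.Q) (α : Set AP) :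
    Set (Moore AP (Oe ∪ Oc) Op) :=
  { M | ∃ s : Mp.S, M = Mp.at' s ∧ q ∈ A.F ∧
      ∀ β ⊆ Oe, (A.δ q (α ∪ β ∪ Mp.out s), Mp.tr s (α ∪ β)) ∈ Win Oe Oc Op A Mp }

/-- `Rem_{M_p}(q, α)`: the residual plants `M_p(s)` such that output `α` leaves the
winning region for some environment output `β ⊆ O_e`. -/
def RemSet {AP : Type} (Oe Oc Op : Set AP) (A : DSA AP)
    (Mp : Moore AP (Oe ∪ Oc) Op) (q : A.Q) (α : Set AP) :
    Set (Moore AP (Oe ∪ Oc) Op) :=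
  { M | ∃ s : Mp.S, M = Mp.at' s ∧
      ∃ β ⊆ Oe, (A.δ q (α ∪ β ∪ Mp.out s), Mp.tr s (α ∪ β)) ∉ Win Oe Oc Op A Mp }

/-!
Safety of a composition is coinductive: the pairs of an automaton state and a machine state with
only safe runs form an invariant, and every pair in an invariant has only safe runs. A letter of a
trace of `par Mp Mc` consists of the two current outputs and a free environment output `β ⊆ Oe`.

If a controller keeps the runs safe, forgetting its states turns the invariant into a safe
controllable region. Conversely, a position from which `α` forces the play into the winning region
is itself winning, so a positional strategy may play `α` there, even when the play returns to it.
Hence a controller that merely tracks the current game position can follow a winning strategy that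
starts with `α`.
-/

namespace Moore

variable {AP : Type} {I O : Set AP}

theorem run_succ' (M : Moore AP I O) (γ : ℕ → Set AP) (i : ℕ) :
    M.run γ (i + 1) = (M.at' (M.tr M.s0 (γ 0))).run (fun j => γ (j + 1)) i := by
  induction i with
  | zero => exact (M.tr_inv M.s0 (γ 0)).symm
  | succ i ih => exact congrArg (fun s => M.tr s (γ (i + 1) ∩ I)) ih

theorem mem_Traces_of_tail_mem {M : Moore AP I O} {γ : ℕ → Set AP} (h₀ : γ 0 ∩ O = M.out M.s0)
    (htail : (fun j => γ (j + 1)) ∈ (M.at' (M.tr M.s0 (γ 0))).Traces) : γ ∈ M.Traces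
  | 0 => h₀
  | j + 1 => (htail j).trans (congrArg M.out (M.run_succ' γ j).symm)

theorem Traces_nonempty (M : Moore AP I O) : M.Traces.Nonempty := by
  let state (n : ℕ) : M.S := (fun s => M.tr s (M.out s))^[n] M.s0
  let γ (n : ℕ) : Set AP := M.out (state n)
  have run_eq_state (n : ℕ) : M.run γ n = state n := by
    induction n with
    | zero => rfl
    | succ n ih =>
      calc M.run γ (n + 1) = M.tr (state n) (γ n ∩ I) := congrArg (fun s => M.tr s (γ n ∩ I)) ih
        _ = M.tr (state n) (M.out (state n)) := (M.tr_inv _ _).symm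
        _ = state (n + 1) := (Function.iterate_succ_apply' (fun s => M.tr s (M.out s)) n M.s0).symm
  refine ⟨γ, fun n => ?_⟩
  rw [run_eq_state, Set.inter_eq_left.2 (M.out_sub _)]

end Moore

theorem DSA.run_succ' {AP : Type} (A : DSA AP) (q : A.Q) (γ : ℕ → Set AP) (i : ℕ) :
    A.run q γ (i + 1) = A.run (A.δ q (γ 0)) (fun j => γ (j + 1)) i := by
  induction i with
  | zero => rfl
  | succ i ih => exact congrArg (fun r => A.δ r (γ (i + 1))) ih

section SafeRuns

variable {AP : Type} {I O : Set AP} {A : DSA AP} {M : Moore AP I O} {q : A.Q} {s : M.S}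

theorem SafeRuns.mem_F (h : SafeRuns A q M) : q ∈ A.F :=
  let ⟨γ, hγ⟩ := M.Traces_nonempty
  h γ hγ 0

theorem SafeRuns.step (h : SafeRuns A q (M.at' s)) {σ : Set AP} (hσ : σ ∩ O = M.out s) :
    SafeRuns A (A.δ q σ) (M.at' (M.tr s σ)) := by
  intro γ hγ i
  let σγ : ℕ → Set AP := fun n => n.casesOn σ γ
  have hσγ : σγ ∈ (M.at' s).Traces := Moore.mem_Traces_of_tail_mem hσ hγ
  have hsafe := h σγ hσγ (i + 1)
  rwa [A.run_succ'] at hsafe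

theorem safeRuns_of_invariant (X : Set (A.Q × M.S)) (hsafe : ∀ p ∈ X, p.1 ∈ A.F)
    (hstep : ∀ p ∈ X, ∀ σ, σ ∩ O = M.out p.2 → (A.δ p.1 σ, M.tr p.2 σ) ∈ X)
    (hqs : (q, s) ∈ X) : SafeRuns A q (M.at' s) := by
  intro γ hγ i
  have hrun (j : ℕ) : (A.run q γ j, (M.at' s).run γ j) ∈ X := by
    induction j with
    | zero => exact hqs
    | succ j ih =>
      have hnext := hstep _ ih (γ j) (hγ j)
      rwa [M.tr_inv] at hnext
  exact hsafe _ (hrun i)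

end SafeRuns

section Game

variable {AP : Type} {I O Oe Oc Op : Set AP} {A : DSA AP}

/-- The position of the safety game of `A` and `M` that follows `p` when the controller outputs `α`
and the environment outputs `β`. -/
def gameStep (A : DSA AP) (M : Moore AP I O) (p : A.Q × M.S) (α β : Set AP) : A.Q × M.S :=
  (A.δ p.1 (α ∪ β ∪ M.out p.2), M.tr p.2 (α ∪ β))

/-- From `p`, the controller output `α` leads into `X` for every environment output `β ⊆ Oe`: the
condition on moves shared by `WinStep` and the characterization of `κStar`. -/
def Forces (Oe : Set AP) (A : DSA AP) (M : Moore AP I O) (X : Set (A.Q × M.S)) (p : A.Q × M.S)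
    (α : Set AP) : Prop :=
  ∀ β ⊆ Oe, gameStep A M p α β ∈ X

theorem Forces.mono {M : Moore AP I O} {X Y : Set (A.Q × M.S)} {p : A.Q × M.S} {α : Set AP}
    (h : Forces Oe A M X p α) (hXY : X ⊆ Y) : Forces Oe A M Y p α :=
  fun β hβ => hXY (h β hβ)

variable {Mp : Moore AP (Oe ∪ Oc) Op} {X : Set (A.Q × Mp.S)} {p : A.Q × Mp.S} {α : Set AP}

theorem WinStep.subset_Win (h : WinStep Oe Oc Op A Mp X) : X ⊆ Win Oe Oc Op A Mp :=
  Set.subset_sUnion_of_mem h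

theorem winStep_Win : WinStep Oe Oc Op A Mp (Win Oe Oc Op A Mp) := by
  refine ⟨fun p ⟨X, hX, hp⟩ => hX.1 p hp, fun p ⟨X, hX, hp⟩ => ?_⟩
  obtain ⟨α, hα, hforces⟩ := hX.2 p hp
  exact ⟨α, hα, Forces.mono hforces hX.subset_Win⟩

theorem WinStep.insert_of_forces (h : WinStep Oe Oc Op A Mp X) (hp : p.1 ∈ A.F) (hα : α ⊆ Oc)
    (hforces : Forces Oe A Mp X p α) : WinStep Oe Oc Op A Mp (insert p X) := by
  have hX : X ⊆ insert p X := Set.subset_insert p X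
  constructor
  · rintro p' (rfl | hp')
    exacts [hp, h.1 p' hp']
  · rintro p' (rfl | hp')
    · exact ⟨α, hα, hforces.mono hX⟩
    · obtain ⟨α', hα', hforces'⟩ := h.2 p' hp'
      exact ⟨α', hα', Forces.mono hforces' hX⟩

theorem mem_Win_of_forces (hp : p.1 ∈ A.F) (hα : α ⊆ Oc)
    (hforces : Forces Oe A Mp (Win Oe Oc Op A Mp) p α) : p ∈ Win Oe Oc Op A Mp :=
  (winStep_Win.insert_of_forces hp hα hforces).subset_Win (Set.mem_insert p _)

theorem WinStep.exists_positional_strategy (h : WinStep Oe Oc Op A Mp X) (hα : α ⊆ Oc)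
    (hforces : Forces Oe A Mp X p α) :
    ∃ f : A.Q × Mp.S → Set AP,
      (∀ p', f p' ⊆ Oc) ∧ f p = α ∧ ∀ p' ∈ X, Forces Oe A Mp X p' (f p') := by
  have hmove (p' : A.Q × Mp.S) :
      ∃ α' ⊆ Oc, (p' = p → α' = α) ∧ (p' ∈ X → Forces Oe A Mp X p' α') := by
    by_cases hp : p' = p
    · exact ⟨α, hα, fun _ => rfl, fun _ => hp ▸ hforces⟩
    by_cases hX : p' ∈ X
    · obtain ⟨α', hα', hforces'⟩ := h.2 p' hX
      exact ⟨α', hα', fun hp' => absurd hp' hp, fun _ => hforces'⟩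
    · exact ⟨∅, Set.empty_subset Oc, fun hp' => absurd hp' hp, fun hX' => absurd hX' hX⟩
  choose f hf hfp hfX using hmove
  exact ⟨f, hf, hfp p rfl, hfX⟩

end Game

section Letter

variable {AP : Type} {Oe Oc Op α β π σ : Set AP}

theorem letter_inter_outputs (hec : Disjoint Oe Oc) (hep : Disjoint Oe Op) (hα : α ⊆ Oc)
    (hβ : β ⊆ Oe) (hπ : π ⊆ Op) : (α ∪ β ∪ π) ∩ (Op ∪ Oc) = π ∪ α := by
  have hβ_disj : β ∩ (Op ∪ Oc) = ∅ := ((hep.sup_right hec).mono_left hβ).inter_eq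
  have hα_sub : α ⊆ Op ∪ Oc := hα.trans Set.subset_union_right
  have hπ_sub : π ⊆ Op ∪ Oc := hπ.trans Set.subset_union_left
  rw [Set.union_inter_distrib_right, Set.union_inter_distrib_right, hβ_disj, Set.union_empty,
    Set.inter_eq_left.2 hα_sub, Set.inter_eq_left.2 hπ_sub, Set.union_comm]

theorem letter_inter_external_inputs (hec : Disjoint Oe Oc) (hep : Disjoint Oe Op) (hα : α ⊆ Oc)
    (hβ : β ⊆ Oe) (hπ : π ⊆ Op) :
    (α ∪ β ∪ π) ∩ (((Oe ∪ Oc) ∪ (Oe ∪ Op)) \ (Op ∪ Oc)) = β := by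
  rw [Set.disjoint_left] at hec hep
  ext x
  have := @hα x
  have := @hβ x
  have := @hπ x
  have := @hec x
  have := @hep x
  simp only [Set.mem_inter_iff, Set.mem_union, Set.mem_sdiff]
  tauto

theorem eq_letter_of_inter_outputs_eq (hcov : Oe ∪ Oc ∪ Op = Set.univ)
    (hσ : σ ∩ (Op ∪ Oc) = π ∪ α) : σ = α ∪ σ ∩ Oe ∪ π :=
  calc σ = σ ∩ (Oe ∪ (Op ∪ Oc)) := by
        rw [Set.union_comm Op, ← Set.union_assoc, hcov, Set.inter_univ]
    _ = σ ∩ Oe ∪ (π ∪ α) := by rw [Set.inter_union_distrib_left, hσ]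
    _ = α ∪ σ ∩ Oe ∪ π := by ac_rfl

end Letter

section Composition

variable {AP : Type} {Oe Oc Op : Set AP} {A : DSA AP}
  {Mp : Moore AP (Oe ∪ Oc) Op} {Mc : Moore AP (Oe ∪ Op) Oc}

theorem par_tr_letter (hec : Disjoint Oe Oc) (hep : Disjoint Oe Op) (s : Mp.S) (c : Mc.S)
    {β : Set AP} (hβ : β ⊆ Oe) :
    (par Mp Mc).tr (s, c) (Mc.out c ∪ β ∪ Mp.out s) =
      (Mp.tr s (Mc.out c ∪ β), Mc.tr c (β ∪ Mp.out s)) := by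
  simp only [par, letter_inter_external_inputs hec hep (Mc.out_sub c) hβ (Mp.out_sub s),
    ← Moore.tr_inv, Set.union_comm β (Mc.out c)]

theorem SafeRuns.par_step (hec : Disjoint Oe Oc) (hep : Disjoint Oe Op) {q : A.Q} {s : Mp.S}
    {c : Mc.S} (h : SafeRuns A q ((par Mp Mc).at' (s, c))) {β : Set AP} (hβ : β ⊆ Oe) :
    SafeRuns A (A.δ q (Mc.out c ∪ β ∪ Mp.out s))
      ((par Mp Mc).at' (Mp.tr s (Mc.out c ∪ β), Mc.tr c (β ∪ Mp.out s))) := by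
  rw [← par_tr_letter hec hep s c hβ]
  exact h.step (letter_inter_outputs hec hep (Mc.out_sub c) hβ (Mp.out_sub s))

theorem winStep_setOf_exists_safeRuns_par (hec : Disjoint Oe Oc) (hep : Disjoint Oe Op) :
    WinStep Oe Oc Op A Mp {p | ∃ c, SafeRuns A p.1 ((par Mp Mc).at' (p.2, c))} :=
  ⟨fun _ ⟨_, h⟩ => h.mem_F,
    fun _ ⟨c, h⟩ => ⟨Mc.out c, Mc.out_sub c, fun _ hβ => ⟨_, h.par_step hec hep hβ⟩⟩⟩

theorem SafeRuns.forces_Win (hec : Disjoint Oe Oc) (hep : Disjoint Oe Op) {q : A.Q} {s : Mp.S}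
    {c : Mc.S} (h : SafeRuns A q ((par Mp Mc).at' (s, c))) :
    Forces Oe A Mp (Win Oe Oc Op A Mp) (q, s) (Mc.out c) :=
  fun _ hβ => (winStep_setOf_exists_safeRuns_par hec hep).subset_Win ⟨_, h.par_step hec hep hβ⟩

end Composition

section PositionalController

variable {AP : Type} {Oe Oc Op : Set AP} {A : DSA AP} {Mp : Moore AP (Oe ∪ Oc) Op}
  {f : A.Q × Mp.S → Set AP} (hf : ∀ p, f p ⊆ Oc)

/-- The controller that follows the positional strategy `f` of the safety game of `A` and `Mp`. Its
state is the current game position; it simulates the plant, so that of its input it reads only the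
environment output. The initial state is arbitrary, to be replaced through `Moore.at'`. -/
def positionalController (A : DSA AP) (Mp : Moore AP (Oe ∪ Oc) Op) (f : A.Q × Mp.S → Set AP)
    (hf : ∀ p, f p ⊆ Oc) : Moore AP (Oe ∪ Op) Oc where
  S := A.Q × Mp.S
  fin := haveI := A.fin; haveI := Mp.fin; inferInstance
  s0 := (A.q0, Mp.s0)
  tr p σ := gameStep A Mp p (f p) (σ ∩ Oe)
  out := f
  tr_inv p σ := by rw [Set.inter_assoc, Set.union_inter_cancel_left]
  out_sub := hf

theorem positionalController_tr (hep : Disjoint Oe Op) (p : A.Q × Mp.S) {β : Set AP}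
    (hβ : β ⊆ Oe) :
    (positionalController A Mp f hf).tr p (β ∪ Mp.out p.2) = gameStep A Mp p (f p) β := by
  have hout : Mp.out p.2 ∩ Oe = ∅ := (hep.symm.mono_left (Mp.out_sub p.2)).inter_eq
  simp only [positionalController, Set.union_inter_distrib_right, Set.inter_eq_left.2 hβ, hout,
    Set.union_empty]

theorem par_positionalController_tr (hec : Disjoint Oe Oc) (hep : Disjoint Oe Op)
    (p : A.Q × Mp.S) {β : Set AP} (hβ : β ⊆ Oe) :
    (par Mp (positionalController A Mp f hf)).tr (p.2, p) (f p ∪ β ∪ Mp.out p.2) =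
      ((gameStep A Mp p (f p) β).2, gameStep A Mp p (f p) β) :=
  (par_tr_letter hec hep p.2 (Mc := positionalController A Mp f hf) p hβ).trans
    (congrArg _ (positionalController_tr hf hep p hβ))

theorem safeRuns_par_positionalController (hec : Disjoint Oe Oc) (hep : Disjoint Oe Op)
    (hcov : Oe ∪ Oc ∪ Op = Set.univ) {X : Set (A.Q × Mp.S)} (hX : ∀ p ∈ X, p.1 ∈ A.F)
    (hforces : ∀ p ∈ X, Forces Oe A Mp X p (f p)) {q : A.Q} {s : Mp.S} (hqs : (q, s) ∈ X) :
    SafeRuns A q ((par Mp (positionalController A Mp f hf)).at' (s, (q, s))) := by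
  let synced (p : A.Q × Mp.S) : A.Q × (par Mp (positionalController A Mp f hf)).S :=
    (p.1, (p.2, p))
  refine safeRuns_of_invariant (synced '' X) ?_ ?_ ⟨(q, s), hqs, rfl⟩
  · rintro _ ⟨p, hp, rfl⟩
    exact hX p hp
  · rintro _ ⟨p, hp, rfl⟩ σ hσ
    have hσ_eq : σ = f p ∪ σ ∩ Oe ∪ Mp.out p.2 := eq_letter_of_inter_outputs_eq hcov hσ
    have hβ : σ ∩ Oe ⊆ Oe := Set.inter_subset_right
    refine ⟨gameStep A Mp p (f p) (σ ∩ Oe), hforces p hp _ hβ, Prod.ext ?_ ?_⟩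
    · exact (congrArg (A.δ p.1) hσ_eq).symm
    · exact ((congrArg _ hσ_eq).trans (par_positionalController_tr hf hec hep p hβ)).symm

end PositionalController

theorem κStar_characterization_general
    {AP : Type} (Oe Oc Op : Set AP) (hec : Disjoint Oe Oc) (hep : Disjoint Oe Op)
    (hcov : Oe ∪ Oc ∪ Op = Set.univ)
    (A : DSA AP) (Mp : Moore AP (Oe ∪ Oc) Op) (q : A.Q) (s : Mp.S) (α : Set AP) (hα : α ⊆ Oc) :
    Mp.at' s ∈ κStar Oe Oc Op A q α ↔
      q ∈ A.F ∧
        ∀ β ⊆ Oe, (A.δ q (α ∪ β ∪ Mp.out s), Mp.tr s (α ∪ β)) ∈ Win Oe Oc Op A Mp := by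
  constructor
  · rintro ⟨Mc, rfl, hsafe⟩
    exact ⟨hsafe.mem_F, SafeRuns.forces_Win (Mp := Mp) hec hep hsafe⟩
  · rintro ⟨hq, hforces⟩
    have hqs : (q, s) ∈ Win Oe Oc Op A Mp := mem_Win_of_forces hq hα hforces
    obtain ⟨f, hf, hfα, hfWin⟩ :=
      winStep_Win.exists_positional_strategy (p := (q, s)) hα hforces
    exact ⟨(positionalController A Mp f hf).at' (q, s), hfα,
      safeRuns_par_positionalController hf hec hep hcov winStep_Win.1 hfWin hqs⟩

/-- Characterization of the exact prophecy annotation via the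
winning region. -/
theorem κStar_characterization
    {AP : Type} [Finite AP] (Oe Oc Op : Set AP)
    (hec : Disjoint Oe Oc) (hep : Disjoint Oe Op) (hcp : Disjoint Oc Op)
    (hcov : Oe ∪ Oc ∪ Op = Set.univ)
    (A : DSA AP) (Mp : Moore AP (Oe ∪ Oc) Op) :
    ∀ (q : A.Q) (s : Mp.S), ∀ α ⊆ Oc,
      (Mp.at' s ∈ κStar Oe Oc Op A q α ↔
        q ∈ A.F ∧
          ∀ β ⊆ Oe, (A.δ q (α ∪ β ∪ Mp.out s), Mp.tr s (α ∪ β)) ∈ Win Oe Oc Op A Mp) :=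
  κStar_characterization_general Oe Oc Op hec hep hcov A Mp
end

section
/- Theorem (the refined over-approximation is correct for the refining plant): Let φ be a specification and A = (Q, q0, δ, safe(F)) a deterministic safety automaton over Σ with L(A) = L(φ) and q0 ∈ F. Let M_p ∈ ℙ be a plant, κ_over any prophecy annotation, and κ'_over(q, α) = κ_over(q, α) \ Rem_{M_p}(q, α) for all q ∈ Q, α ⊆ O_c. Then the prophecy-annotated controller (A, κ'_over) is correct for M_p: every controller M_c ∈ ℂ with M_c ⊨ (A, κ'_over) ∥ M_p satisfies M_p ∥ M_c ⊨ φ. -/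
/-!
The trace sets of `M_p ∥ M_c` and `M_c ∥ M_p` coincide, and since the three output sets cover all
propositions, each letter of such a trace splits into the controller output `α`, an environment
output `β ⊆ O_e` and the plant output. If the residual plant `M_p(s)` is outside `Rem(q, α)`, this
letter therefore leads from `(q, s)` into the winning region, whose automaton states are safe. So
every automaton state after the first one is safe, and the first one is safe by assumption.
-/

section ParallelComposition

variable {AP : Type} {I₁ O₁ I₂ O₂ : Set AP} (M₁ : Moore AP I₁ O₁) (M₂ : Moore AP I₂ O₂)

theorem par_run_comm (γ : ℕ → Set AP) (i : ℕ) :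
    (par M₁ M₂).run γ i = ((par M₂ M₁).run γ i).swap := by
  induction i with
  | zero => rfl
  | succ i ih =>
    simp only [Moore.run]
    rw [ih]
    simp only [par, Prod.swap, Set.union_comm I₁ I₂, Set.union_comm O₁ O₂]

theorem par_out_run_comm (γ : ℕ → Set AP) (i : ℕ) :
    (par M₁ M₂).out ((par M₁ M₂).run γ i) = (par M₂ M₁).out ((par M₂ M₁).run γ i) := by
  rw [par_run_comm M₁ M₂]
  exact Set.union_comm _ _

theorem par_traces_comm : (par M₁ M₂).Traces = (par M₂ M₁).Traces := by
  ext γ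
  refine forall_congr' fun i => ?_
  rw [par_out_run_comm M₁ M₂, Set.union_comm O₁ O₂]

variable {M₁ M₂} in
theorem letter_eq_of_mem_par_traces {E : Set AP} (hcov : E ∪ O₁ ∪ O₂ = Set.univ)
    {γ : ℕ → Set AP} (hγ : γ ∈ (par M₁ M₂).Traces) (i : ℕ) :
    γ i = M₁.out ((par M₁ M₂).run γ i).1 ∪ γ i ∩ E ∪ M₂.out ((par M₁ M₂).run γ i).2 := by
  have hout : γ i ∩ (O₁ ∪ O₂) =
      M₁.out ((par M₁ M₂).run γ i).1 ∪ M₂.out ((par M₁ M₂).run γ i).2 := hγ i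
  calc
    γ i = γ i ∩ (O₁ ∪ O₂ ∪ E) := by
      rw [Set.union_comm, ← Set.union_assoc, hcov, Set.inter_univ]
    _ = γ i ∩ (O₁ ∪ O₂) ∪ γ i ∩ E := Set.inter_union_distrib_left ..
    _ = _ := by rw [hout, Set.union_right_comm]

end ParallelComposition

section SafetyGame

variable {AP : Type} {Oe Oc Op : Set AP} {A : DSA AP} {Mp : Moore AP (Oe ∪ Oc) Op}

theorem fst_mem_of_mem_win {p : A.Q × Mp.S} (hp : p ∈ Win Oe Oc Op A Mp) : p.1 ∈ A.F := by
  obtain ⟨X, hX, hpX⟩ := hp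
  exact hX.1 p hpX

theorem step_mem_win_of_notMem_remSet {q : A.Q} {s : Mp.S} {α β : Set AP}
    (hrem : Mp.at' s ∉ RemSet Oe Oc Op A Mp q α) (hβ : β ⊆ Oe) :
    (A.δ q (α ∪ β ∪ Mp.out s), Mp.tr s (α ∪ β)) ∈ Win Oe Oc Op A Mp := by
  by_contra hwin
  exact hrem ⟨s, rfl, β, hβ, hwin⟩

theorem safeRuns_of_consistent_of_disjoint_remSet (hcov : Oe ∪ Oc ∪ Op = Set.univ)
    {q : A.Q} (hq : q ∈ A.F) {κ : A.Q → Set AP → Set (Moore AP (Oe ∪ Oc) Op)}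
    (hκ : ∀ q' α, Disjoint (κ q' α) (RemSet Oe Oc Op A Mp q' α))
    {Mc : Moore AP (Oe ∪ Op) Oc} (hMc : Consistent Oe Oc Op A q κ Mc Mp) :
    SafeRuns A q (par Mc Mp) := by
  rintro γ hγ (_ | i)
  · exact hq
  · have hrem := (hκ _ _).notMem_of_mem_left (hMc γ hγ i)
    have hsafe := fst_mem_of_mem_win
      (step_mem_win_of_notMem_remSet hrem (Set.inter_subset_right (s := γ i)))
    rwa [← letter_eq_of_mem_par_traces hcov hγ i] at hsafe

end SafetyGame

theorem refined_over_approximation_correct_general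
    {AP : Type} {Oe Oc Op : Set AP} (hcov : Oe ∪ Oc ∪ Op = Set.univ)
    {φ : Set (ℕ → Set AP)} {A : DSA AP} (hL : A.Lang ⊆ φ) (hq0 : A.q0 ∈ A.F)
    {Mp : Moore AP (Oe ∪ Oc) Op} {κ : A.Q → Set AP → Set (Moore AP (Oe ∪ Oc) Op)}
    (hκ : ∀ q α, Disjoint (κ q α) (RemSet Oe Oc Op A Mp q α)) :
    CorrectFor Oe Oc Op A κ φ Mp := by
  intro Mc hMc
  rw [par_traces_comm]
  exact fun γ hγ => hL (safeRuns_of_consistent_of_disjoint_remSet hcov hq0 hκ hMc γ hγ)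

/-- the refined over-approximation is correct for the refining plant. -/
theorem refined_over_approximation_correct
    {AP : Type} [Finite AP] (Oe Oc Op : Set AP)
    (hec : Disjoint Oe Oc) (hep : Disjoint Oe Op) (hcp : Disjoint Oc Op)
    (hcov : Oe ∪ Oc ∪ Op = Set.univ)
    (φ : Set (ℕ → Set AP)) (A : DSA AP)
    (hL : A.Lang = φ) (hq0 : A.q0 ∈ A.F)
    (Mp : Moore AP (Oe ∪ Oc) Op)
    (κover : A.Q → Set AP → Set (Moore AP (Oe ∪ Oc) Op)) :
    CorrectFor Oe Oc Op A
      (fun q α => κover q α \ RemSet Oe Oc Op A Mp q α) φ Mp :=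
  refined_over_approximation_correct_general hcov hL.subset hq0 fun _ _ => disjoint_sdiff_self_left
end

section
/- Forward-completeness of the exact prophecy annotation: Let A = (Q, q0, δ, safe(F)) be a deterministic safety automaton over Σ with exact prophecy annotation κ*. If M_p ∈ κ*(q, α) for some plant M_p ∈ ℙ, state q ∈ Q, and output α ⊆ O_c, then there exists a controller M_c ∈ ℂ such that M_c ⊨ (A(q), κ*) ∥ M_p, where A(q) denotes A with initial state q; in other words, the prophecy-annotated controller (A, κ*) is forward-complete. -/
/-! A controller `Mc` witnessing `Mp ∈ κ*(q, α)` is itself consistent with `(A(q), κ*)`. Safety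
passes to the residual system after any letter of a trace, because prepending that letter to a
trace of the residual system gives back a trace of the original one. So at every reachable triple
the residual of `Mc` witnesses that the residual of `Mp` satisfies the prophecy there. -/

namespace DSA

variable {AP : Type}

theorem run_succ_eq_run_tail (A : DSA AP) (q : A.Q) (γ : ℕ → Set AP) :
    ∀ i, A.run q γ (i + 1) = A.run (A.δ q (γ 0)) (fun j ↦ γ (j + 1)) i
  | 0 => rfl
  | i + 1 => congrArg (A.δ · (γ (i + 1))) (run_succ_eq_run_tail A q γ i)

end DSA

namespace Moore

variable {AP : Type} {I O : Set AP}

theorem run_succ_eq_run_tail (M : Moore AP I O) (γ : ℕ → Set AP) :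
    ∀ i, M.run γ (i + 1) = (M.at' (M.tr M.s0 (γ 0 ∩ I))).run (fun j ↦ γ (j + 1)) i
  | 0 => rfl
  | i + 1 => congrArg (M.tr · (γ (i + 1) ∩ I)) (run_succ_eq_run_tail M γ i)

theorem mem_traces_of_head_of_tail {M : Moore AP I O} {γ : ℕ → Set AP}
    (head : γ 0 ∩ O = M.out M.s0)
    (tail : (fun j ↦ γ (j + 1)) ∈ (M.at' (M.tr M.s0 (γ 0 ∩ I))).Traces) :
    γ ∈ M.Traces
  | 0 => head
  | j + 1 => (tail j).trans (congrArg M.out (M.run_succ_eq_run_tail γ j).symm)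

end Moore

namespace SafeRuns

variable {AP : Type} {I O : Set AP} {A : DSA AP} {q : A.Q} {M : Moore AP I O}

theorem at'_tr (h : SafeRuns A q M) {σ : Set AP} (hσ : σ ∩ O = M.out M.s0) :
    SafeRuns A (A.δ q σ) (M.at' (M.tr M.s0 (σ ∩ I))) := by
  intro γ hγ i
  obtain ⟨σγ, rfl, rfl⟩ : ∃ σγ : ℕ → Set AP, σγ 0 = σ ∧ (fun j ↦ σγ (j + 1)) = γ :=
    ⟨fun | 0 => σ | j + 1 => γ j, rfl, rfl⟩
  have mem_traces : σγ ∈ M.Traces := Moore.mem_traces_of_head_of_tail hσ hγ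
  exact A.run_succ_eq_run_tail q σγ i ▸ h σγ mem_traces (i + 1)

theorem at'_run (h : SafeRuns A q M) {γ : ℕ → Set AP} (hγ : γ ∈ M.Traces) :
    ∀ i, SafeRuns A (A.run q γ i) (M.at' (M.run γ i))
  | 0 => h
  | i + 1 => (at'_run h hγ i).at'_tr (hγ i)

end SafeRuns

section Par

variable {AP : Type} {I₁ O₁ I₂ O₂ : Set AP}

theorem run_par_eq_swap (M₁ : Moore AP I₁ O₁) (M₂ : Moore AP I₂ O₂) (γ : ℕ → Set AP) :
    ∀ i, (par M₁ M₂).run γ i = ((par M₂ M₁).run γ i).swap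
  | 0 => rfl
  | i + 1 => by
    simp only [Moore.run]
    rw [run_par_eq_swap M₁ M₂ γ i]
    simp only [par, Prod.swap, Set.union_comm I₁ I₂, Set.union_comm O₁ O₂]

theorem traces_par_comm (M₁ : Moore AP I₁ O₁) (M₂ : Moore AP I₂ O₂) :
    (par M₁ M₂).Traces = (par M₂ M₁).Traces := by
  ext γ
  refine forall_congr' fun j ↦ ?_
  have out_swap : (par M₁ M₂).out ((par M₁ M₂).run γ j) =
      (par M₂ M₁).out ((par M₂ M₁).run γ j) := by
    rw [run_par_eq_swap M₁ M₂]
    exact Set.union_comm _ _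
  rw [out_swap, Set.union_comm O₁ O₂]

end Par

theorem SafeRuns.consistent_κStar {AP : Type} {Oe Oc Op : Set AP} {A : DSA AP} {q : A.Q}
    {Mp : Moore AP (Oe ∪ Oc) Op} {Mc : Moore AP (Oe ∪ Op) Oc}
    (h : SafeRuns A q (par Mp Mc)) :
    Consistent Oe Oc Op A q (κStar Oe Oc Op A) Mc Mp := by
  intro γ hγ i
  rw [traces_par_comm] at hγ
  have safe := h.at'_run hγ i
  rw [run_par_eq_swap Mp Mc] at safe
  exact ⟨Mc.at' ((par Mc Mp).run γ i).1, rfl, safe⟩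

theorem κStar_forward_complete_general {AP : Type} {Oe Oc Op : Set AP} {A : DSA AP}
    {Mp : Moore AP (Oe ∪ Oc) Op} {q : A.Q} {α : Set AP} (h : Mp ∈ κStar Oe Oc Op A q α) :
    ∃ Mc : Moore AP (Oe ∪ Op) Oc,
      Mc.out Mc.s0 = α ∧ Consistent Oe Oc Op A q (κStar Oe Oc Op A) Mc Mp :=
  let ⟨Mc, out_eq, safe⟩ := h
  ⟨Mc, out_eq, safe.consistent_κStar⟩

/-- Forward-completeness of the exact prophecy annotation:
if a plant satisfies the prophecy `κ*(q, α)`, then some controller is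
consistent with `(A(q), κ*)` w.r.t. this plant. -/
theorem κStar_forward_complete
    {AP : Type} [Finite AP] (Oe Oc Op : Set AP)
    (hec : Disjoint Oe Oc) (hep : Disjoint Oe Op) (hcp : Disjoint Oc Op)
    (hcov : Oe ∪ Oc ∪ Op = Set.univ)
    (A : DSA AP) (Mp : Moore AP (Oe ∪ Oc) Op) (q : A.Q) (α : Set AP) (hα : α ⊆ Oc)
    (h : Mp ∈ κStar Oe Oc Op A q α) :
    ∃ Mc : Moore AP (Oe ∪ Op) Oc,
      Consistent Oe Oc Op A q (κStar Oe Oc Op A) Mc Mp :=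
  (κStar_forward_complete_general h).imp fun _ ↦ And.right
end
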